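/- arXiv:2206.03744 — 4 statements merged into one kernel-verified Lean document; each statement's English description precedes it below -/
import Mathlib

section
/- The function φ(δ) = π^{3/2} / (2·Γ((2π − δ)/(2π))·Γ((π + δ)/(2π))) is strictly increasing on the interval (0, π/2), where Γ is the Euler Gamma function. (This function equals 2d_Π(0)/r_Π(0) for a rhomb Π with acute angle δ and unit side length, with 0 its center.) -/
/-!
With `u = (π + δ)/(2π)` and `v = (2π - δ)/(2π)` the sum `u + v = 3/2` is constant, `u < v` on the
interval, and `u` increases with `δ`. So the claim is that `Γ(u) Γ(v)` strictly decreases as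
`u, v` move towards each other with fixed sum (`Gamma_mul_lt_of_add_eq`). Log-convexity of `Γ`
gives the weak inequality (`Gamma_mul_le_of_add_eq`). Strictness is obtained by applying the
weak inequality to the arguments shifted by one: `Γ(u) Γ(v) = Γ(u + 1) Γ(v + 1) / (u v)`, and the
product `u v` strictly increases.
-/

open Real

theorem Gamma_mul_le_of_add_eq {x y u v : ℝ} (hx : 0 < x) (hxu : x < u) (huy : u < y)
    (h : u + v = x + y) : Gamma u * Gamma v ≤ Gamma x * Gamma y := by
  have hy : 0 < y := by linarith
  have hd : 0 < y - x := by linarith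
  have hu : 0 < u := by linarith
  have hv : 0 < v := by linarith
  -- `u = a x + b y` and `v = b x + a y` with `a + b = 1`.
  obtain ⟨a, b, ha, hb, hab, hu', hv'⟩ : ∃ a b : ℝ, 0 ≤ a ∧ 0 ≤ b ∧ a + b = 1 ∧
      a * x + b * y = u ∧ b * x + a * y = v := by
    refine ⟨(y - u) / (y - x), (u - x) / (y - x), div_nonneg (by linarith) hd.le,
      div_nonneg (by linarith) hd.le, ?_, ?_, ?_⟩
    · field_simp; ring
    · field_simp; ring
    · obtain rfl : v = x + y - u := by linarith
      field_simp; ring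
  have h1 := convexOn_log_Gamma.2 (Set.mem_Ioi.2 hx) (Set.mem_Ioi.2 hy) ha hb hab
  have h2 := convexOn_log_Gamma.2 (Set.mem_Ioi.2 hx) (Set.mem_Ioi.2 hy) hb ha (by linarith)
  simp only [smul_eq_mul, Function.comp_apply, hu', hv'] at h1 h2
  have gx := Gamma_pos_of_pos hx
  have gy := Gamma_pos_of_pos hy
  have gu := Gamma_pos_of_pos hu
  have gv := Gamma_pos_of_pos hv
  rw [← log_le_log_iff (by positivity) (by positivity), log_mul gu.ne' gv.ne',
    log_mul gx.ne' gy.ne']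
  obtain rfl : b = 1 - a := by linarith
  linarith

theorem Gamma_mul_lt_of_add_eq {x y u v : ℝ} (hx : 0 < x) (hxu : x < u) (huy : u < y)
    (h : u + v = x + y) : Gamma u * Gamma v < Gamma x * Gamma y := by
  have hy : 0 < y := by linarith
  have hu : 0 < u := by linarith
  have hv : 0 < v := by linarith
  have key := Gamma_mul_le_of_add_eq (x := x + 1) (y := y + 1) (u := u + 1) (v := v + 1)
    (by linarith) (by linarith) (by linarith) (by linarith)
  rw [Gamma_add_one hx.ne', Gamma_add_one hy.ne', Gamma_add_one hu.ne',
    Gamma_add_one hv.ne'] at key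
  have hprod : x * y < u * v := by
    obtain rfl : v = x + y - u := by linarith
    nlinarith [mul_pos (sub_pos.2 hxu) (sub_pos.2 huy)]
  have gxy := mul_pos (Gamma_pos_of_pos hx) (Gamma_pos_of_pos hy)
  refine lt_of_mul_lt_mul_left (a := u * v) ?_ (by positivity)
  calc u * v * (Gamma u * Gamma v) ≤ x * y * (Gamma x * Gamma y) := by linarith
    _ < u * v * (Gamma x * Gamma y) := mul_lt_mul_of_pos_right hprod gxy

/-- The function `φ(δ) = π^{3/2}/(2·Γ((2π-δ)/(2π))·Γ((π+δ)/(2π)))` is strictly increasing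
on `(0, π/2)`. -/
theorem stmt_14 :
    StrictMonoOn
      (fun δ : ℝ => Real.pi ^ ((3 : ℝ) / 2) /
        (2 * Real.Gamma ((2 * Real.pi - δ) / (2 * Real.pi)) *
          Real.Gamma ((Real.pi + δ) / (2 * Real.pi))))
      (Set.Ioo (0 : ℝ) (Real.pi / 2)) := by
  intro s hs t ht hst
  obtain ⟨hs0, hs1⟩ := hs
  obtain ⟨ht0, ht1⟩ := ht
  have hpi := Real.pi_pos
  have key := Gamma_mul_lt_of_add_eq (x := (π + s) / (2 * π)) (y := (2 * π - s) / (2 * π))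
    (u := (π + t) / (2 * π)) (v := (2 * π - t) / (2 * π)) (by positivity)
    (by gcongr) (by gcongr ?_ / _; linarith) (by field_simp; ring)
  have g1 : 0 < Gamma ((π + t) / (2 * π)) := Gamma_pos_of_pos (by positivity)
  have g2 : 0 < Gamma ((2 * π - t) / (2 * π)) :=
    Gamma_pos_of_pos (div_pos (by linarith) (by positivity))
  exact div_lt_div_of_pos_left (by positivity) (by positivity) (by linarith)
end

section
/- For a natural number n ≥ 3 set a_n = (1/n)·2^{1 − 2/n}·Γ(1/n)·Γ(1/2)/Γ(1/n + 1/2) (this equals (1/n)·2^{1−2/n}·B(1/n, 1/2), the value of 2d_N(0)/r_N(0) for a regular n-gon N centered at 0). Then the sequence (a_n)_{n ≥ 3} is strictly increasing and converges to 2 as n → ∞. -/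
open Real Filter

/-!
Put `x = 1/n`. Legendre's duplication formula turns `a_n` into `2 Γ(1+x)² / Γ(1+2x)`
(`sideRatio_eq`). Continuity of `Γ` at `1` gives the limit `2`. For monotonicity, let
`g = log Γ`, which is strictly convex on `(0, ∞)`; the claim is that `2 g(1+x) - g(1+2x)` is
strictly decreasing in `x > 0`, i.e. that for `0 < x < y` the slope of `g` over
`[1+x, 1+y]` is less than its slope over `[1+2x, 1+2y]`, which lies further to the right.
-/

/-- Strictness comes from the functional equation: `log Γ(s) = log Γ(s+1) - log s` is the sum of
a convex and a strictly convex function. -/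
lemma strictConvexOn_log_Gamma :
    StrictConvexOn ℝ (Set.Ioi 0) (fun s : ℝ => log (Gamma s)) := by
  have h1 : ConvexOn ℝ (Set.Ioi (0 : ℝ)) (fun s : ℝ => log (Gamma (s + 1))) := by
    refine ⟨convex_Ioi 0, fun x hx y hy a b ha hb hab => ?_⟩
    have hx' : (0 : ℝ) < x := hx
    have hy' : (0 : ℝ) < y := hy
    have h := convexOn_log_Gamma.2 (show x + 1 ∈ Set.Ioi (0 : ℝ) from by
      simp only [Set.mem_Ioi]; linarith) (show y + 1 ∈ Set.Ioi (0 : ℝ) from by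
      simp only [Set.mem_Ioi]; linarith) ha hb hab
    simp only [smul_eq_mul, Function.comp] at h ⊢
    have e : a * x + b * y + 1 = a * (x + 1) + b * (y + 1) := by linear_combination -hab
    rw [e]
    exact h
  refine (h1.add_strictConvexOn strictConcaveOn_log_Ioi.neg).congr ?_
  intro s hs
  have hs' : (0 : ℝ) < s := hs
  simp only [Pi.add_apply, Pi.neg_apply]
  rw [Gamma_add_one hs'.ne', log_mul hs'.ne' (Gamma_pos_of_pos hs').ne']
  ring

lemma sideRatio_eq {x : ℝ} (hx : 0 < x) :
    x * (2 : ℝ) ^ ((1 : ℝ) - 2 * x) * (Gamma x * Gamma (1 / 2) / Gamma (x + 1 / 2)) =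
      2 * Gamma (x + 1) ^ 2 / Gamma (2 * x + 1) := by
  have hd := Gamma_mul_Gamma_add_half x
  have h1 := (Gamma_pos_of_pos hx).ne'
  have h2 := (Gamma_pos_of_pos (show 0 < x + 1 / 2 by linarith)).ne'
  have h3 := (Gamma_pos_of_pos (show 0 < 2 * x by linarith)).ne'
  rw [Gamma_add_one hx.ne', Gamma_add_one (by linarith : 2 * x ≠ 0), Gamma_one_half_eq]
  -- `generalize` keeps `field_simp` from rewriting the arguments of `Γ` and the exponent of `2`.
  generalize Gamma (x + 1 / 2) = A at *
  generalize Gamma (2 * x) = C at *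
  generalize (2 : ℝ) ^ ((1 : ℝ) - 2 * x) = P at *
  field_simp
  linear_combination -hd

lemma Gamma_ratio_strictAnti {x y : ℝ} (hx : 0 < x) (hxy : x < y) :
    2 * Gamma (y + 1) ^ 2 / Gamma (2 * y + 1) < 2 * Gamma (x + 1) ^ 2 / Gamma (2 * x + 1) := by
  have px := Gamma_pos_of_pos (show 0 < x + 1 by linarith)
  have py := Gamma_pos_of_pos (show 0 < y + 1 by linarith)
  have px2 := Gamma_pos_of_pos (show 0 < 2 * x + 1 by linarith)
  have py2 := Gamma_pos_of_pos (show 0 < 2 * y + 1 by linarith)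
  have mx : x + 1 ∈ Set.Ioi (0 : ℝ) := by simp only [Set.mem_Ioi]; linarith
  have my : y + 1 ∈ Set.Ioi (0 : ℝ) := by simp only [Set.mem_Ioi]; linarith
  have mx2 : 2 * x + 1 ∈ Set.Ioi (0 : ℝ) := by simp only [Set.mem_Ioi]; linarith
  have my2 : 2 * y + 1 ∈ Set.Ioi (0 : ℝ) := by simp only [Set.mem_Ioi]; linarith
  have s1 := strictConvexOn_log_Gamma.secant_strict_mono mx my my2
    (by linarith) (by linarith) (by linarith)
  have s2 := strictConvexOn_log_Gamma.secant_strict_mono my2 mx mx2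
    (by linarith) (by linarith) (by linarith)
  rw [← neg_div_neg_eq, ← neg_div_neg_eq (_ - _) (2 * x + 1 - _)] at s2
  simp only [neg_sub] at s2
  have s := s1.trans s2
  rw [div_lt_div_iff₀ (by linarith) (by linarith)] at s
  have key : 2 * (log (Gamma (y + 1)) - log (Gamma (x + 1)))
      < log (Gamma (2 * y + 1)) - log (Gamma (2 * x + 1)) := by
    have : 0 < y - x := by linarith
    nlinarith
  rw [← log_lt_log_iff (by positivity) (by positivity), log_div (by positivity) (by positivity),
    log_div (by positivity) (by positivity), log_mul (by positivity) (by positivity),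
    log_mul (by positivity) (by positivity), log_pow, log_pow]
  push_cast
  linarith

/-- The value `a_n = (1/n)·2^{1-2/n}·B(1/n,1/2)` of `2d_N(0)/r_N(0)` for the regular
`n`-gon is strictly increasing in `n ≥ 3` and tends to `2` as `n → ∞`. -/
theorem stmt_15
    (a : ℕ → ℝ)
    (ha : ∀ n : ℕ, a n = (1 / (n : ℝ)) * (2 : ℝ) ^ ((1 : ℝ) - 2 / (n : ℝ)) *
      (Real.Gamma (1 / (n : ℝ)) * Real.Gamma (1 / 2) / Real.Gamma (1 / (n : ℝ) + 1 / 2))) :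
    (∀ m n : ℕ, 3 ≤ m → m < n → a m < a n) ∧
    Filter.Tendsto a Filter.atTop (nhds 2) := by
  have hform : ∀ n : ℕ, 0 < n → a n =
      2 * Gamma (1 / (n : ℝ) + 1) ^ 2 / Gamma (2 * (1 / (n : ℝ)) + 1) := by
    intro n hn
    have hx : 0 < 1 / (n : ℝ) := by positivity
    rw [ha, ← sideRatio_eq hx, mul_one_div]
  constructor
  · intro m n hm hmn
    rw [hform m (by omega), hform n (by omega)]
    have hm0 : (0 : ℝ) < m := by exact_mod_cast (by omega : 0 < m)
    have hn0 : (0 : ℝ) < n := by exact_mod_cast (by omega : 0 < n)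
    exact Gamma_ratio_strictAnti (by positivity)
      (one_div_lt_one_div_of_lt hm0 (by exact_mod_cast hmn))
  · have hc : ContinuousAt Gamma 1 := (differentiableOn_Gamma_Ioi.differentiableAt
      (Ioi_mem_nhds one_pos)).continuousAt
    have hc0 : ContinuousAt (fun x : ℝ => 2 * Gamma (x + 1) ^ 2 / Gamma (2 * x + 1)) 0 := by
      have c1 : ContinuousAt (fun x : ℝ => Gamma (x + 1)) 0 :=
        ContinuousAt.comp_of_eq (g := Gamma) (f := fun x : ℝ => x + 1) hc (by fun_prop) (by norm_num)
      have c2 : ContinuousAt (fun x : ℝ => Gamma (2 * x + 1)) 0 :=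
        ContinuousAt.comp_of_eq (g := Gamma) (f := fun x : ℝ => 2 * x + 1) hc (by fun_prop) (by norm_num)
      exact ((c1.pow 2).const_mul 2).div c2 (by norm_num)
    have hl := hc0.tendsto.comp (tendsto_one_div_atTop_nhds_zero_nat (𝕜 := ℝ))
    norm_num at hl
    refine hl.congr' ?_
    filter_upwards [eventually_gt_atTop 0] with n hn
    rw [hform n hn]
    simp
end

section
/- Let D1 be the image of the open unit disk under φ1(z) = √(1+z) − 1 (principal branch of the square root). For every t ∈ (0, √2), the point w = t − 1 lies in D1, and the distance from w to the boundary ∂D1 equals √(√(1−t²) − (1−t²)) if 0 < t < 2√2/3, and equals √2 − t if 2√2/3 ≤ t < √2. -/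
open Complex Metric Set

/-!
In the coordinate `v = w + 1 = x + iy`, the set `D1` is `{x > 0, |v² - 1| < 1}`, that is
`x > 0` and `(x² + y²)² < 2 (x² - y²)`. Its frontier therefore lies on the lemniscate
`(x² + y²)² = 2 (x² - y²)` with `x ≥ 0` (`frontier_lemniscate`), and contains every point of this
curve with `x > 0` (`mem_frontier_lemniscate`).

On the curve put `u = x² + y² + 1` and `X = 2 x`. Then `u² - X² = 1`, `1 ≤ u ≤ 3`, and the squared
distance from `v` to `t` is `u - t X + t² - 1`: the problem is to minimise a linear function on an
arc of a hyperbola. If `t < 1`, then `(u - t X)² - (1 - t²) = (t u - X)²`, so the minimum over the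
whole branch is `√(1 - t²)`, attained at `u = 1 / √(1 - t²)`; that point lies on the arc `u ≤ 3`
exactly when `t ≤ 2√2/3`. For larger `t` the minimum is at the endpoint `u = 3`, i.e. at `v = √2`,
as the tangent line to the hyperbola there shows.
-/

/-- Membership in `D1` as real inequalities in `v = w + 1`: since `Re (1 + z) > 0` on the disk, the
principal square root has positive real part, and it inverts squaring on the right half-plane. -/
lemma mem_lemniscate_iff (w : ℂ) :
    w ∈ (fun z : ℂ => (1 + z) ^ ((1 : ℂ) / 2) - 1) '' (Metric.ball (0 : ℂ) 1) ↔
      0 < w.re + 1 ∧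
        ((w.re + 1) ^ 2 + w.im ^ 2) ^ 2 < 2 * ((w.re + 1) ^ 2 - w.im ^ 2) := by
  have key : ‖(w + 1) ^ 2 - 1‖ < 1 ↔
      ((w.re + 1) ^ 2 + w.im ^ 2) ^ 2 < 2 * ((w.re + 1) ^ 2 - w.im ^ 2) := by
    rw [← sq_lt_one_iff₀ (norm_nonneg _), ← Complex.normSq_eq_norm_sq, Complex.normSq_apply]
    simp only [pow_two, sub_re, sub_im, mul_re, mul_im, add_re, add_im, one_re, one_im]
    constructor <;> intro h <;> nlinarith
  rw [← key]
  constructor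
  · rintro ⟨z, hz, rfl⟩
    have hz1 : ‖z‖ < 1 := by simpa using hz
    have hre : 0 < (1 + z).re := by
      have := (abs_lt.1 ((Complex.abs_re_le_norm z).trans_lt hz1)).1
      simp; linarith
    have hne : (1 + z) ≠ 0 := by
      intro h; rw [h] at hre; simp at hre
    have hsq : ((1 + z) ^ ((1 : ℂ) / 2)) ^ 2 = 1 + z := by
      rw [← Complex.cpow_nat_mul]; simp
    have hpos : 0 < ((1 + z) ^ ((1 : ℂ) / 2)).re := by
      rw [Complex.cpow_def_of_ne_zero hne, Complex.exp_re]
      apply mul_pos (Real.exp_pos _)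
      have him : (Complex.log (1 + z) * (1 / 2)).im = Complex.arg (1 + z) / 2 := by
        rw [Complex.mul_im]; simp [Complex.log_im]; ring
      rw [him]
      have h2 := (abs_lt.1 (Complex.abs_arg_lt_pi_div_two_iff.2 (Or.inl hre)))
      apply Real.cos_pos_of_mem_Ioo
      constructor <;> linarith [Real.pi_pos, h2.1, h2.2]
    constructor
    · simpa using hpos
    · simp only [sub_add_cancel, hsq]; simpa using hz1
  · rintro ⟨h1, h2⟩
    refine ⟨(w + 1) ^ 2 - 1, by simpa using h2, ?_⟩
    have harg := abs_lt.1 (Complex.abs_arg_lt_pi_div_two_iff.2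
      (Or.inl (by simpa using h1 : 0 < (w + 1).re)))
    have : ((w + 1) ^ 2) ^ ((1 : ℂ) / 2) = w + 1 := by
      have := Complex.pow_cpow_nat_inv (x := w + 1) (n := 2) (by norm_num)
        (by push_cast; linarith [harg.1]) (by push_cast; linarith [harg.2])
      simpa using this
    simp only [add_sub_cancel, this, add_sub_cancel_right]

lemma frontier_lemniscate {D : Set ℂ}
    (hD : ∀ w : ℂ, w ∈ D ↔ 0 < w.re + 1 ∧
      ((w.re + 1) ^ 2 + w.im ^ 2) ^ 2 < 2 * ((w.re + 1) ^ 2 - w.im ^ 2))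
    {w : ℂ} (hw : w ∈ frontier D) :
    0 ≤ w.re + 1 ∧ ((w.re + 1) ^ 2 + w.im ^ 2) ^ 2 = 2 * ((w.re + 1) ^ 2 - w.im ^ 2) := by
  have hDset : D = {w : ℂ | 0 < w.re + 1 ∧
      ((w.re + 1) ^ 2 + w.im ^ 2) ^ 2 < 2 * ((w.re + 1) ^ 2 - w.im ^ 2)} := Set.ext hD
  have hopen : IsOpen D := by
    rw [hDset]
    rw [Set.ofPred_and]
    apply IsOpen.inter <;> apply isOpen_lt <;> fun_prop
  have hcl : closure D ⊆ {w : ℂ | 0 ≤ w.re + 1 ∧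
      ((w.re + 1) ^ 2 + w.im ^ 2) ^ 2 ≤ 2 * ((w.re + 1) ^ 2 - w.im ^ 2)} := by
    apply closure_minimal
    · intro w hw
      have := (hD w).1 hw
      exact ⟨this.1.le, this.2.le⟩
    · rw [Set.ofPred_and]
      apply IsClosed.inter <;> apply isClosed_le <;> fun_prop
  rw [hopen.frontier_eq] at hw
  obtain ⟨h1, h2⟩ := hcl hw.1
  refine ⟨h1, ?_⟩
  have h3 := hw.2
  rw [hD] at h3
  rcases h1.eq_or_lt with h0 | h0
  · rw [← h0] at h2 ⊢
    have : w.im ^ 2 = 0 := by nlinarith [sq_nonneg w.im, sq_nonneg (w.im ^ 2)]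
    rw [this]; norm_num
  · exact le_antisymm h2 (not_lt.1 fun h => h3 ⟨h0, h⟩)

/-- A point `v = x + iy` of the curve with `x > 0` is a limit of the points `r v`, `r ↑ 1`, which
are in the domain. -/
lemma mem_frontier_lemniscate {D : Set ℂ}
    (hD : ∀ w : ℂ, w ∈ D ↔ 0 < w.re + 1 ∧
      ((w.re + 1) ^ 2 + w.im ^ 2) ^ 2 < 2 * ((w.re + 1) ^ 2 - w.im ^ 2))
    {x y : ℝ} (hx : 0 < x) (h : (x ^ 2 + y ^ 2) ^ 2 = 2 * (x ^ 2 - y ^ 2)) :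
    (⟨x - 1, y⟩ : ℂ) ∈ frontier D := by
  refine ⟨?_, fun hi => ?_⟩
  · have hlim : Filter.Tendsto (fun r : ℝ => (r : ℂ) * (⟨x, y⟩ : ℂ) - 1) (nhdsWithin 1 (Set.Iio 1))
        (nhds (⟨x - 1, y⟩ : ℂ)) := by
      have hc : Continuous (fun r : ℝ => (r : ℂ) * (⟨x, y⟩ : ℂ) - 1) := by fun_prop
      have := (hc.tendsto 1).mono_left (nhdsWithin_le_nhds (s := Set.Iio 1))
      convert this using 2
      apply Complex.ext <;> simp
    refine mem_closure_of_tendsto hlim ?_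
    filter_upwards [Ioo_mem_nhdsLT (zero_lt_one' ℝ)] with r hr
    rw [hD]
    have e1 : ((r : ℂ) * (⟨x, y⟩ : ℂ) - 1).re + 1 = r * x := by simp
    have e2 : ((r : ℂ) * (⟨x, y⟩ : ℂ) - 1).im = r * y := by simp
    rw [e1, e2]
    refine ⟨mul_pos hr.1 hx, ?_⟩
    have hr2 : 0 < r ^ 2 := pow_pos hr.1 2
    have hr3 : r ^ 2 < 1 := by nlinarith [hr.1, hr.2]
    have hp : 0 < (x ^ 2 + y ^ 2) ^ 2 := by positivity
    have e3 : ((r * x) ^ 2 + (r * y) ^ 2) ^ 2 = r ^ 2 * (r ^ 2 * (x ^ 2 + y ^ 2) ^ 2) := by ring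
    have e4 : 2 * ((r * x) ^ 2 - (r * y) ^ 2) = r ^ 2 * (x ^ 2 + y ^ 2) ^ 2 := by rw [h]; ring
    rw [e3, e4]
    exact mul_lt_mul_of_pos_left (by nlinarith) hr2
  · have := ((hD _).1 (interior_subset hi)).2
    simp only [sub_add_cancel] at this
    exact absurd h this.ne

lemma dist_sub_one (t : ℝ) (w : ℂ) :
    dist ((t : ℂ) - 1) w = Real.sqrt ((w.re + 1 - t) ^ 2 + w.im ^ 2) := by
  rw [Complex.dist_eq_re_im]
  congr 1
  simp
  ring

theorem stmt_16
    (D1 : Set ℂ)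
    (hD1 : D1 = (fun z : ℂ => (1 + z) ^ ((1 : ℂ) / 2) - 1) '' (Metric.ball (0 : ℂ) 1)) :
    ∀ t : ℝ, t ∈ Set.Ioo (0 : ℝ) (Real.sqrt 2) →
      ((t : ℂ) - 1) ∈ D1 ∧
      (t < 2 * Real.sqrt 2 / 3 →
        Metric.infDist ((t : ℂ) - 1) (frontier D1) =
          Real.sqrt (Real.sqrt (1 - t ^ 2) - (1 - t ^ 2))) ∧
      (2 * Real.sqrt 2 / 3 ≤ t →
        Metric.infDist ((t : ℂ) - 1) (frontier D1) = Real.sqrt 2 - t) := by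
  have hD : ∀ w : ℂ, w ∈ D1 ↔ 0 < w.re + 1 ∧
      ((w.re + 1) ^ 2 + w.im ^ 2) ^ 2 < 2 * ((w.re + 1) ^ 2 - w.im ^ 2) := by
    intro w; rw [hD1]; exact mem_lemniscate_iff w
  rintro t ⟨ht0, ht2⟩
  have hs0 : 0 < Real.sqrt 2 := by positivity
  have hs : Real.sqrt 2 ^ 2 = 2 := Real.sq_sqrt (by norm_num)
  have htsq : t ^ 2 < 2 := by nlinarith
  have hfr : (⟨Real.sqrt 2 - 1, 0⟩ : ℂ) ∈ frontier D1 :=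
    mem_frontier_lemniscate hD hs0 (by rw [hs]; norm_num)
  refine ⟨?_, ?_, ?_⟩
  · rw [hD]
    simp only [sub_re, ofReal_re, one_re, sub_add_cancel, sub_im, ofReal_im, one_im]
    refine ⟨ht0, ?_⟩
    nlinarith [mul_pos (pow_pos ht0 2) (sub_pos.2 htsq)]
  · intro ht
    have ht9 : t ^ 2 < 8 / 9 := by nlinarith
    have ht1 : t < 1 := by nlinarith
    obtain ⟨c, hc⟩ : ∃ c, c = Real.sqrt (1 - t ^ 2) := ⟨_, rfl⟩
    have hc0 : 0 < c := by rw [hc]; exact Real.sqrt_pos.2 (by linarith)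
    have hcsq : c ^ 2 = 1 - t ^ 2 := by rw [hc]; exact Real.sq_sqrt (by linarith)
    have hc3 : 1 / 3 < c := by nlinarith
    have hc1 : c < 1 := by nlinarith [pow_pos ht0 2]
    rw [← hc]
    apply le_antisymm
    · -- the minimiser: `u = 1 / c`, `x = t / (2 c)`, `y² = (u - 1) (3 - u) / 4`
      have hy : Real.sqrt ((1 / c - 1) * (3 - 1 / c) / 4) ^ 2 = (1 / c - 1) * (3 - 1 / c) / 4 := by
        apply Real.sq_sqrt
        have h1 : 1 ≤ 1 / c := by rw [le_div_iff₀ hc0]; linarith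
        have h2 : 1 / c ≤ 3 := by rw [div_le_iff₀ hc0]; linarith
        have := mul_nonneg (sub_nonneg.2 h1) (sub_nonneg.2 h2)
        linarith
      have htc : t ^ 2 = 1 - c ^ 2 := by linarith
      have hx : (t / (2 * c)) ^ 2 = ((1 / c) ^ 2 - 1) / 4 := by
        rw [div_pow, htc]; field_simp; norm_num
      have hmem := mem_frontier_lemniscate hD (x := t / (2 * c))
        (y := Real.sqrt ((1 / c - 1) * (3 - 1 / c) / 4)) (by positivity)
        (by rw [hx, hy]; ring)
      refine (Metric.infDist_le_dist_of_mem hmem).trans_eq ?_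
      rw [dist_sub_one]
      congr 1
      simp only [sub_add_cancel]
      rw [hy, sub_sq, hx]
      have : 2 * (t / (2 * c)) * t = 1 / c - c := by
        field_simp; linarith
      rw [this, htc]
      ring
    · refine (Metric.le_infDist ⟨_, hfr⟩).2 fun w hw => ?_
      obtain ⟨hw0, hwe⟩ := frontier_lemniscate hD hw
      rw [dist_sub_one]
      apply Real.sqrt_le_sqrt
      set x := w.re + 1
      set y := w.im
      obtain ⟨u, hu⟩ : ∃ u, u = x ^ 2 + y ^ 2 + 1 := ⟨_, rfl⟩
      have hhyp : u ^ 2 = 1 + (2 * x) ^ 2 := by rw [hu]; linear_combination hwe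
      have hu1 : 1 ≤ u := by rw [hu]; nlinarith [sq_nonneg x, sq_nonneg y]
      have hux : 2 * x < u := by nlinarith
      have hpos : 0 ≤ u - t * (2 * x) := by nlinarith
      have hmin : c ≤ u - t * (2 * x) := by
        refine le_of_sq_le_sq ?_ hpos
        rw [hcsq]
        nlinarith [sq_nonneg (t * u - 2 * x)]
      nlinarith
  · intro ht
    apply le_antisymm
    · refine (Metric.infDist_le_dist_of_mem hfr).trans_eq ?_
      rw [dist_sub_one]
      simp only [sub_add_cancel]
      rw [zero_pow two_ne_zero, add_zero, Real.sqrt_sq (by linarith)]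
    · refine (Metric.le_infDist ⟨_, hfr⟩).2 fun w hw => ?_
      obtain ⟨hw0, hwe⟩ := frontier_lemniscate hD hw
      rw [dist_sub_one]
      apply Real.le_sqrt_of_sq_le
      set x := w.re + 1
      set y := w.im
      obtain ⟨u, hu⟩ : ∃ u, u = x ^ 2 + y ^ 2 + 1 := ⟨_, rfl⟩
      have hhyp : u ^ 2 = 1 + (2 * x) ^ 2 := by rw [hu]; linear_combination hwe
      have hu1 : 1 ≤ u := by rw [hu]; nlinarith [sq_nonneg x, sq_nonneg y]
      have hu3 : u ≤ 3 := by nlinarith [sq_nonneg y]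
      have hx2 : x ≤ Real.sqrt 2 := by
        apply Real.le_sqrt_of_sq_le; nlinarith
      -- the tangent line to `u² = 1 + X²` at `X = 2√2`, `u = 3`
      have htan : 1 + 2 * Real.sqrt 2 * (2 * x) ≤ 3 * u := by
        refine le_of_sq_le_sq ?_ (by linarith)
        nlinarith [sq_nonneg (2 * x - 2 * Real.sqrt 2)]
      nlinarith [mul_nonneg (sub_nonneg.2 hx2) (sub_nonneg.2 ht)]
end

section
/- Let D2 be the image of the open unit disk under φ2(z) = z + √(1+z²) − 1 (principal branch of the square root). Then every real w ∈ (√2 − 2, √2) belongs to D2, and the distance from w to ∂D2 equals w − (√2 − 2) if √2 − 2 < w ≤ √2 − 1, and equals √2 − w if √2 − 1 ≤ w < √2. In particular, the open disk {w : |w − (√2 − 1)| < 1} is contained in D2 and the points √2 − 2 and √2 lie on ∂D2. -/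
/-!
Put `u = w + 1`, so that `w = φ2(z)` reads `u = z + s` with `s = √(1 + z²)`, `Re s > 0`. Since
`(s + z)(s - z) = 1`, the map inverts to `z = (u - u⁻¹) / 2`, `s = (u + u⁻¹) / 2`, and `Re s > 0`
is equivalent to `Re u > 0`. Hence `D2` is given by `Re u > 0` and `|u² - 1| < 2 |u|`. The identity
`(|u - 1|² - 2)(|u + 1|² - 2) = |u² - 1|² - 4 |u|²` turns this into `|u - 1| < √2 < |u + 1|`, so
`D2` is the crescent `{w : |w| < √2 < |w + 2|}` (`image_eq_crescent`).

The crescent is open and, by the triangle inequality, contains the unit disk about `√2 - 1`. The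
points `√2 - 2` and `√2` are in the closure of this disk but not in the crescent, so they are
boundary points; they bound the distances from above. For real `w` in the interval, the disk about
`w` through the nearer of the two points is contained in that unit disk, which bounds the distances
from below.
-/

open Complex Metric Set

/-- `|u² - 1|² - 4 |u|²` factors through the two circles of radius `√2` about `±1`. -/
lemma normSq_factor (u : ℂ) :
    (normSq (u - 1) - 2) * (normSq (u + 1) - 2) = normSq (u ^ 2 - 1) - 4 * normSq u := by
  simp only [normSq_apply, pow_two, sub_re, sub_im, add_re, add_im, one_re, one_im, mul_re, mul_im]
  ring

lemma normSq_add_one_sub (u : ℂ) : normSq (u + 1) - normSq (u - 1) = 4 * u.re := by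
  simp only [normSq_apply, sub_re, sub_im, add_re, add_im, one_re, one_im]
  ring

lemma norm_lt_sqrt_two_iff (u : ℂ) : ‖u‖ < √2 ↔ normSq u < 2 := by
  rw [Real.lt_sqrt (norm_nonneg u), normSq_eq_norm_sq]

lemma sqrt_two_lt_norm_iff (u : ℂ) : √2 < ‖u‖ ↔ 2 < normSq u := by
  rw [normSq_eq_norm_sq, ← not_le, ← not_le, Real.le_sqrt (norm_nonneg u) zero_le_two]

lemma sqrt_re_pos {z : ℂ} (hz : ‖z‖ < 1) : 0 < ((1 + z ^ 2) ^ ((1 : ℂ) / 2)).re := by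
  rw [one_div, cpow_inv_two_re]
  apply Real.sqrt_pos.2
  have h1 : ‖z ^ 2‖ < 1 := by
    rw [norm_pow]
    exact pow_lt_one₀ (norm_nonneg z) hz two_ne_zero
  have h2 := (abs_le.1 (abs_re_le_norm (z ^ 2))).1
  have h3 := norm_nonneg (1 + z ^ 2)
  rw [add_re, one_re]
  linarith

lemma image_eq_crescent :
    (fun z : ℂ => z + (1 + z ^ 2) ^ ((1 : ℂ) / 2) - 1) '' ball (0 : ℂ) 1 =
      {w : ℂ | ‖w‖ < √2 ∧ √2 < ‖w + 2‖} := by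
  ext w
  obtain ⟨u, rfl⟩ : ∃ u, w = u - 1 := ⟨w + 1, by ring⟩
  have hu2 : u - 1 + 2 = u + 1 := by ring
  rw [mem_ofPred_eq, hu2, norm_lt_sqrt_two_iff, sqrt_two_lt_norm_iff]
  have hfac := normSq_factor u
  have hdiff := normSq_add_one_sub u
  constructor
  · rintro ⟨z, hz, hzu⟩
    rw [mem_ball_zero_iff] at hz
    have hs := sqrt_re_pos hz
    have hs2 : ((1 + z ^ 2) ^ ((1 : ℂ) / 2)) ^ 2 = 1 + z ^ 2 := by
      simp
    simp only at hzu
    set s := (1 + z ^ 2) ^ ((1 : ℂ) / 2)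
    obtain rfl : u = z + s := by linear_combination -hzu
    have hinv : (z + s) * (s - z) = 1 := by linear_combination hs2
    have hne : z + s ≠ 0 := left_ne_zero_of_mul_eq_one hinv
    have hpos : 0 < normSq (z + s) := normSq_pos.2 hne
    have hre : 0 < (z + s).re := by
      -- `2 s = u + u⁻¹`, and `u⁻¹` has the same sign of the real part as `u`
      have h : s - z = (z + s)⁻¹ := eq_inv_of_mul_eq_one_right hinv
      have h' := congrArg re h
      rw [inv_re, sub_re] at h'
      have h2 : 2 * s.re = (z + s).re * (1 + (normSq (z + s))⁻¹) := by
        rw [mul_add, ← div_eq_mul_inv, ← h', add_re]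
        ring
      have h3 : 0 < 1 + (normSq (z + s))⁻¹ := by positivity
      exact pos_of_mul_pos_left (h2 ▸ by positivity) h3.le
    have hz1 : normSq z < 1 := by
      rw [normSq_eq_norm_sq]
      exact pow_lt_one₀ (norm_nonneg z) hz two_ne_zero
    have hsq : normSq ((z + s) ^ 2 - 1) = 4 * normSq z * normSq (z + s) := by
      rw [show (z + s) ^ 2 - 1 = 2 * z * (z + s) by linear_combination hs2]
      simp only [normSq_mul, normSq_ofNat]
      ring
    constructor <;> by_contra! hcon <;> nlinarith
  · rintro ⟨hA, hB⟩
    have hre : 0 < u.re := by linarith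
    have hne : u ≠ 0 := by
      rintro rfl
      simp at hre
    have hpos : 0 < normSq u := normSq_pos.2 hne
    refine ⟨(u - u⁻¹) / 2, ?_, ?_⟩
    · rw [mem_ball_zero_iff, ← sq_lt_one_iff₀ (norm_nonneg _), ← normSq_eq_norm_sq]
      have h : u ^ 2 - 1 = 2 * ((u - u⁻¹) / 2) * u := by
        field_simp
      rw [h] at hfac
      simp only [normSq_mul, normSq_ofNat] at hfac
      by_contra! hcon
      nlinarith
    · have hs : 0 < ((u + u⁻¹) / 2).re := by
        rw [div_ofNat_re, add_re, inv_re]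
        positivity
      have h : 1 + ((u - u⁻¹) / 2) ^ 2 = ((u + u⁻¹) / 2) ^ 2 := by
        field_simp
        ring
      simp only
      rw [h, one_div, sq_cpow_two_inv hs]
      ring

lemma isOpen_crescent : IsOpen {w : ℂ | ‖w‖ < √2 ∧ √2 < ‖w + 2‖} :=
  (isOpen_lt continuous_norm continuous_const).inter
    (isOpen_lt continuous_const (continuous_norm.comp (continuous_add_const 2)))

lemma ball_subset_crescent :
    ball ((√2 - 1 : ℝ) : ℂ) 1 ⊆ {w : ℂ | ‖w‖ < √2 ∧ √2 < ‖w + 2‖} := by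
  intro w hw
  rw [mem_ball, dist_eq_norm] at hw
  have h2 : (1 : ℝ) ≤ √2 := Real.one_le_sqrt.2 one_le_two
  constructor
  · have h := norm_le_norm_sub_add w ((√2 - 1 : ℝ) : ℂ)
    rw [Complex.norm_of_nonneg (r := √2 - 1) (by linarith)] at h
    linarith
  · have h := norm_sub_norm_le ((√2 + 1 : ℝ) : ℂ) (w + 2)
    have e : ((√2 + 1 : ℝ) : ℂ) - (w + 2) = -(w - ((√2 - 1 : ℝ) : ℂ)) := by
      push_cast
      ring
    rw [e, norm_neg, Complex.norm_of_nonneg (r := √2 + 1) (by linarith)] at h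
    linarith

/-- A real point at distance one from `√2 - 1` lies in the closure of the crescent. -/
lemma mem_closure_crescent {a : ℝ} (ha : |a - (√2 - 1)| = 1) :
    (a : ℂ) ∈ closure {w : ℂ | ‖w‖ < √2 ∧ √2 < ‖w + 2‖} := by
  apply closure_mono ball_subset_crescent
  rw [closure_ball _ one_ne_zero, mem_closedBall, dist_eq_norm, ← ofReal_sub, norm_real,
    Real.norm_eq_abs, ha]

lemma left_mem_frontier :
    ((√2 - 2 : ℝ) : ℂ) ∈ frontier {w : ℂ | ‖w‖ < √2 ∧ √2 < ‖w + 2‖} := by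
  rw [isOpen_crescent.frontier_eq]
  refine ⟨mem_closure_crescent (by norm_num), fun h => ?_⟩
  have h2 := h.2
  rw [show ((√2 - 2 : ℝ) : ℂ) + 2 = ((√2 : ℝ) : ℂ) by push_cast; ring,
    Complex.norm_of_nonneg (Real.sqrt_nonneg 2)] at h2
  exact lt_irrefl _ h2

lemma right_mem_frontier :
    ((√2 : ℝ) : ℂ) ∈ frontier {w : ℂ | ‖w‖ < √2 ∧ √2 < ‖w + 2‖} := by
  rw [isOpen_crescent.frontier_eq]
  refine ⟨mem_closure_crescent (by norm_num), fun h => ?_⟩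
  have h2 := h.1
  rw [Complex.norm_of_nonneg (Real.sqrt_nonneg 2)] at h2
  exact lt_irrefl _ h2

/-- The ball of radius `r` about `w` lies in the unit disk about `√2 - 1`, hence misses the
frontier of the (open) crescent. -/
lemma le_infDist_frontier {w r : ℝ} (h : r + |w - (√2 - 1)| ≤ 1) :
    r ≤ infDist (w : ℂ) (frontier {w : ℂ | ‖w‖ < √2 ∧ √2 < ‖w + 2‖}) := by
  refine (le_infDist ⟨_, right_mem_frontier⟩).2 fun y hy => ?_
  by_contra! hlt
  rw [isOpen_crescent.frontier_eq] at hy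
  refine hy.2 (ball_subset_crescent ?_)
  have htri := dist_triangle y (w : ℂ) ((√2 - 1 : ℝ) : ℂ)
  rw [dist_comm y (w : ℂ), dist_eq_norm (w : ℂ) ((√2 - 1 : ℝ) : ℂ), ← ofReal_sub, norm_real,
    Real.norm_eq_abs] at htri
  rw [mem_ball]
  linarith

/-- For the crescent domain `D2 = φ2(𝔹²)`, `φ2(z) = z + √(1+z²) - 1`: every real
`w ∈ (√2-2, √2)` belongs to `D2`, with `d_{D2}(w) = w - (√2-2)` for `w ≤ √2-1` and
`d_{D2}(w) = √2 - w` for `w ≥ √2-1`; the disk `{|w - (√2-1)| < 1}` is contained in `D2`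
and the points `√2-2` and `√2` lie on `∂D2`. -/
theorem stmt_19
    (D2 : Set ℂ)
    (hD2 : D2 = (fun z : ℂ => z + (1 + z ^ 2) ^ ((1 : ℂ) / 2) - 1) ''
      (Metric.ball (0 : ℂ) 1)) :
    (∀ w : ℝ, w ∈ Set.Ioo (Real.sqrt 2 - 2) (Real.sqrt 2) →
      (w : ℂ) ∈ D2 ∧
      (w ≤ Real.sqrt 2 - 1 →
        Metric.infDist (w : ℂ) (frontier D2) = w - (Real.sqrt 2 - 2)) ∧
      (Real.sqrt 2 - 1 ≤ w →
        Metric.infDist (w : ℂ) (frontier D2) = Real.sqrt 2 - w)) ∧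
    Metric.ball (((Real.sqrt 2 - 1 : ℝ)) : ℂ) 1 ⊆ D2 ∧
    ((Real.sqrt 2 - 2 : ℝ) : ℂ) ∈ frontier D2 ∧
    ((Real.sqrt 2 : ℝ) : ℂ) ∈ frontier D2 := by
  subst hD2
  rw [image_eq_crescent]
  refine ⟨fun w hw => ⟨ball_subset_crescent ?_, fun hle => ?_, fun hle => ?_⟩,
    ball_subset_crescent, left_mem_frontier, right_mem_frontier⟩
  · rw [mem_ball, dist_eq_norm, ← ofReal_sub, norm_real, Real.norm_eq_abs, abs_lt]
    constructor <;> linarith [hw.1, hw.2]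
  · refine le_antisymm ((infDist_le_dist_of_mem left_mem_frontier).trans_eq ?_)
      (le_infDist_frontier ?_)
    · rw [dist_eq_norm, ← ofReal_sub, Complex.norm_of_nonneg (by linarith [hw.1])]
    · rw [abs_of_nonpos (by linarith)]
      linarith
  · refine le_antisymm ((infDist_le_dist_of_mem right_mem_frontier).trans_eq ?_)
      (le_infDist_frontier ?_)
    · rw [dist_comm, dist_eq_norm, ← ofReal_sub, Complex.norm_of_nonneg (by linarith [hw.2])]
    · rw [abs_of_nonneg (by linarith)]
      linarith
end
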